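/- arXiv:2401.14701 — 5 statements merged into one kernel-verified Lean document; each statement's English description precedes it below -/
import Mathlib

section
/- For every x ∈ L²(0,1) and every integer j ≥ 1, ∫₀¹ t^{j-1} (∫_t¹ x(s)/s ds) dt = (1/j) ∫₀¹ t^{j-1} x(t) dt. Consequently, the composition H∘C* of the Hausdorff moment operator H with the adjoint Cesàro operator C* equals the composition D∘H of the diagonal operator D with H, i.e. [H(C*x)]_j = (1/j)[Hx]_j for all j and all x ∈ L²(0,1). -/
/-!
The moment identity is Fubini's theorem on the triangle `0 < t < s < 1`: the kernel
`t ^ j * (x s / s)` restricted to the triangle has `t`-integral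
`s ^ (j + 1) / (j + 1) * (x s / s) = s ^ j * x s / (j + 1)` (`integral_triangleKernel`).
The same computation applied to `|x|` bounds the `t`-integral of the absolute value of the kernel
by `|x s|`; since `L²(0,1) ⊆ L¹(0,1)`, the kernel is integrable on the square
(`integrable_triangleKernel`) and the order of integration may be exchanged
(`moment_tail_integral`). The operator identities are this formula read coordinatewise.
-/

open MeasureTheory

noncomputable section

/-- The Hilbert space `L²(0,1)` (with Lebesgue measure on `(0,1)`). -/
abbrev L2I : Type := Lp ℝ 2 (volume.restrict (Set.Ioo (0:ℝ) 1))

/-- The Hilbert space `ℓ²` of square-summable real sequences (indexed from `0`,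
so that the entry of index `j : ℕ` is the `(j+1)`-st component in the paper). -/
abbrev ell2 : Type := lp (fun _ : ℕ => ℝ) 2

open Set

/-- The integrand `t ^ j * (f s / s)` cut off to the triangle `t < s`. -/
def triangleKernel (f : ℝ → ℝ) (j : ℕ) (t s : ℝ) : ℝ :=
  (Iio s).indicator (fun u => u ^ j * (f s / s)) t

lemma norm_triangleKernel (f : ℝ → ℝ) (j : ℕ) {t s : ℝ} (ht : 0 < t) (hs : 0 < s) :
    ‖triangleKernel f j t s‖ = triangleKernel (fun u => |f u|) j t s := by
  simp only [triangleKernel, norm_indicator_eq_indicator_norm]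
  by_cases h : t < s
  · simp [indicator, h, abs_of_pos hs, abs_of_pos ht]
  · simp [indicator, h]

lemma integrable_triangleKernel_left (f : ℝ → ℝ) (j : ℕ) (s : ℝ) :
    Integrable (fun t => triangleKernel f j t s) (volume.restrict (Ioo (0:ℝ) 1)) := by
  unfold triangleKernel
  refine Integrable.indicator ?_ measurableSet_Iio
  have h : ContinuousOn (fun u : ℝ => u ^ j * (f s / s)) (Icc 0 1) := by fun_prop
  exact (h.integrableOn_compact isCompact_Icc).mono_set Ioo_subset_Icc_self

lemma integral_triangleKernel (f : ℝ → ℝ) (j : ℕ) {s : ℝ} (hs : s ∈ Ioo (0:ℝ) 1) :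
    ∫ t in Ioo (0:ℝ) 1, triangleKernel f j t s = (1 / ((j : ℝ) + 1)) * (s ^ j * f s) := by
  unfold triangleKernel
  have hset : Ioo (0:ℝ) 1 ∩ Iio s = Ioo 0 s := by
    ext t
    simp only [mem_inter_iff, mem_Ioo, mem_Iio]
    exact ⟨fun h => ⟨h.1.1, h.2⟩, fun h => ⟨⟨h.1, h.2.trans hs.2⟩, h.2⟩⟩
  rw [setIntegral_indicator measurableSet_Iio, hset, integral_mul_const,
    ← integral_Ioc_eq_integral_Ioo, ← intervalIntegral.integral_of_le hs.1.le, integral_pow]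
  have h0 : s ≠ 0 := hs.1.ne'
  have hj : (j : ℝ) + 1 ≠ 0 := by positivity
  field_simp
  simp only [ne_eq, Nat.add_eq_zero_iff, one_ne_zero, and_false, not_false_eq_true, zero_pow, sub_zero]
  ring

lemma integrable_triangleKernel (f : ℝ → ℝ) (hm : Measurable f)
    (hf : Integrable f (volume.restrict (Ioo (0:ℝ) 1))) (j : ℕ) :
    Integrable (Function.uncurry (triangleKernel f j))
      ((volume.restrict (Ioo (0:ℝ) 1)).prod (volume.restrict (Ioo (0:ℝ) 1))) := by
  have hmeas : Measurable (Function.uncurry (triangleKernel f j)) := by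
    have h : Function.uncurry (triangleKernel f j) =
        {p : ℝ × ℝ | p.1 < p.2}.indicator (fun p => p.1 ^ j * (f p.2 / p.2)) := by
      ext ⟨t, s⟩
      simp [triangleKernel, indicator]
    rw [h]
    refine Measurable.indicator (by fun_prop) (measurableSet_lt measurable_fst measurable_snd)
  rw [integrable_prod_iff' hmeas.aestronglyMeasurable]
  refine ⟨ae_of_all _ fun s => integrable_triangleKernel_left f j s, ?_⟩
  have hn : ∀ᵐ s ∂(volume.restrict (Ioo (0:ℝ) 1)),
      ∫ t in Ioo (0:ℝ) 1, ‖triangleKernel f j t s‖ = (1 / ((j : ℝ) + 1)) * (s ^ j * |f s|) := by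
    filter_upwards [ae_restrict_mem measurableSet_Ioo] with s hs
    rw [← integral_triangleKernel (fun u => |f u|) j hs]
    exact setIntegral_congr_fun measurableSet_Ioo
      fun t ht => norm_triangleKernel f j ht.1 hs.1
  refine Integrable.congr ?_ (Filter.EventuallyEq.symm hn)
  refine Integrable.const_mul ?_ _
  refine hf.mono (by fun_prop) ?_
  filter_upwards [ae_restrict_mem measurableSet_Ioo] with s hs
  rw [norm_mul, norm_pow, Real.norm_eq_abs, abs_of_pos hs.1, Real.norm_eq_abs, abs_abs,
    Real.norm_eq_abs]
  exact mul_le_of_le_one_left (abs_nonneg _) (pow_le_one₀ hs.1.le hs.2.le)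

lemma moment_tail_integral (f : ℝ → ℝ) (hm : Measurable f)
    (hf : Integrable f (volume.restrict (Ioo (0:ℝ) 1))) (j : ℕ) :
    (∫ t in Ioo (0:ℝ) 1, t ^ j * ∫ s in Ioo t 1, f s / s)
      = (1 / ((j : ℝ) + 1)) * ∫ t in Ioo (0:ℝ) 1, t ^ j * f t := by
  have h1 : ∀ t ∈ Ioo (0:ℝ) 1, (t ^ j * ∫ s in Ioo t 1, f s / s)
      = ∫ s in Ioo (0:ℝ) 1, triangleKernel f j t s := by
    intro t ht
    have h : (fun s => triangleKernel f j t s) =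
        (Ioi t).indicator (fun s => t ^ j * (f s / s)) := by
      ext s
      simp [triangleKernel, indicator]
    have hset : Ioo (0:ℝ) 1 ∩ Ioi t = Ioo t 1 := by
      ext s
      simp only [mem_inter_iff, mem_Ioo, mem_Ioi]
      exact ⟨fun h => ⟨h.2, h.1.2⟩, fun h => ⟨⟨ht.1.trans h.1, h.2⟩, h.1⟩⟩
    rw [h, setIntegral_indicator measurableSet_Ioi, hset, integral_const_mul]
  rw [setIntegral_congr_fun measurableSet_Ioo h1,
    integral_integral_swap (integrable_triangleKernel f hm hf j),
    setIntegral_congr_fun measurableSet_Ioo (fun s hs => integral_triangleKernel f j hs),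
    integral_const_mul]

/-- For every `x ∈ L²(0,1)` and every `j ≥ 1` (here the index
`j : ℕ` runs from `0`, corresponding to the paper's `j+1`):
`∫₀¹ t^j (∫_t¹ x(s)/s ds) dt = (1/(j+1)) ∫₀¹ t^j x(t) dt`.
Consequently `H ∘ C* = D ∘ H`, i.e. `[H(C*x)]_j = (1/(j+1))·[Hx]_j = [D(Hx)]_j`
for all `j` and all `x ∈ L²(0,1)`, where `H` is the Hausdorff moment operator,
`C*` the adjoint Cesàro operator and `D` the diagonal operator. -/
theorem statement0
    (H : L2I →L[ℝ] ell2) (Cs : L2I →L[ℝ] L2I) (D : ell2 →L[ℝ] ell2)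
    (hH : ∀ (x : L2I) (j : ℕ), H x j = ∫ t in Set.Ioo (0:ℝ) 1, x t * t ^ j)
    (hC : ∀ x : L2I, ∀ᵐ t ∂(volume.restrict (Set.Ioo (0:ℝ) 1)),
      Cs x t = ∫ s in Set.Ioo t 1, x s / s)
    (hD : ∀ (y : ell2) (j : ℕ), D y j = y j / ((j : ℝ) + 1)) :
    (∀ (x : L2I) (j : ℕ),
      (∫ t in Set.Ioo (0:ℝ) 1, t ^ j * ∫ s in Set.Ioo t 1, x s / s)
        = (1 / ((j : ℝ) + 1)) * ∫ t in Set.Ioo (0:ℝ) 1, t ^ j * x t) ∧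
    (∀ (x : L2I) (j : ℕ),
      H (Cs x) j = (1 / ((j : ℝ) + 1)) * H x j ∧ H (Cs x) j = D (H x) j) := by
  have key : ∀ (x : L2I) (j : ℕ),
      (∫ t in Set.Ioo (0:ℝ) 1, t ^ j * ∫ s in Set.Ioo t 1, x s / s)
        = (1 / ((j : ℝ) + 1)) * ∫ t in Set.Ioo (0:ℝ) 1, t ^ j * x t := fun x j =>
    moment_tail_integral x (Lp.stronglyMeasurable x).measurable
      ((Lp.memLp x).integrable (by norm_num)) j
  have hHC : ∀ (x : L2I) (j : ℕ), H (Cs x) j = (1 / ((j : ℝ) + 1)) * H x j := by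
    intro x j
    have hcongr : ∫ t in Set.Ioo (0:ℝ) 1, Cs x t * t ^ j
        = ∫ t in Set.Ioo (0:ℝ) 1, t ^ j * ∫ s in Set.Ioo t 1, x s / s := by
      refine integral_congr_ae ?_
      filter_upwards [hC x] with t ht
      rw [ht, mul_comm]
    rw [hH, hH, hcongr, key]
    simp only [mul_comm]
  refine ⟨key, fun x j => ⟨hHC x j, ?_⟩⟩
  rw [hHC, hD]
  ring

end
end

section
/- The composition T = H∘C* : L²(0,1) → ℓ² of the Hausdorff moment operator H with the adjoint Cesàro operator C* is a compact operator, even though both H and C* are non-compact. -/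
/-! Exchanging the order of integration,
`∫₀¹ tʲ ∫ₜ¹ x(s)/s ds dt = ∫₀¹ x(s)/s · sʲ⁺¹/(j+1) ds = (1/(j+1)) ∫₀¹ x(s) sʲ ds`,
so `H ∘ C* = D ∘ H` with `D = diag(1/(j+1))` (`comp_apply_eq`). Truncating `D` to its first `n`
entries exhibits `H ∘ C*` as a norm limit of finite-rank operators
(`isCompactOperator_of_diagonal`).

Non-compactness comes from a bounded sequence `xₙ` whose images are bounded away from `0` in norm
while `0` is their only possible subsequential limit (`not_isCompactOperator_of_seq`).
* For `H`, take the normalised monomials `√(2n+1) tⁿ`. The images have entries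
  `√(2n+1)/(n+j+1)`, which tend to `0` as `n → ∞` for each fixed `j`, while the entries with `j ≤ n`
  alone contribute at least `1/4` to the squared norm.
* For `C*`, take the normalised indicators of `(2⁻ⁿ⁻¹, 2⁻ⁿ)`. They are orthonormal, hence weakly
  null, and `C*` maps each to a function of norm at least `log 2`.
-/

open MeasureTheory

noncomputable section

section

open Filter Topology Set

lemma integral_Ioo_pow {s : ℝ} (hs : 0 ≤ s) (j : ℕ) :
    ∫ t in Ioo 0 s, t ^ j = s ^ (j + 1) / (j + 1) := by
  rw [← integral_Ioc_eq_integral_Ioo, ← intervalIntegral.integral_of_le hs, integral_pow]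
  simp

lemma integral_Iio_indicator {s : ℝ} (hs : s ∈ Ioo (0:ℝ) 1) (c : ℝ) (j : ℕ) :
    ∫ t in Ioo (0:ℝ) 1, (Iio s).indicator (fun t => c * t ^ j) t
      = c * (s ^ (j + 1) / (j + 1)) := by
  rw [setIntegral_indicator measurableSet_Iio, Ioo_inter_Iio, min_eq_right hs.2.le,
    integral_const_mul, integral_Ioo_pow hs.1.le]

/-- The `j`-th moment of the adjoint Cesàro transform of `x` is `1 / (j + 1)` times that of `x`. By
Fubini on the triangle `t < s` it equals `∫ x(s)/s · (∫₀ˢ tʲ dt) ds`; the same computation with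
`|x|` gives the integrability that Fubini needs. -/
lemma moment_cesaro {x : ℝ → ℝ} (hx : Integrable x (volume.restrict (Ioo (0:ℝ) 1))) (j : ℕ) :
    ∫ t in Ioo (0:ℝ) 1, (∫ s in Ioo t 1, x s / s) * t ^ j
      = (1 / ((j:ℝ) + 1)) * ∫ s in Ioo (0:ℝ) 1, x s * s ^ j := by
  set μ := volume.restrict (Ioo (0:ℝ) 1) with hμ
  have hmem : ∀ᵐ s ∂μ, s ∈ Ioo (0:ℝ) 1 := ae_restrict_mem measurableSet_Ioo
  let F : ℝ → ℝ → ℝ := fun t s => (Iio s).indicator (fun t => x s / s * t ^ j) t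
  have hxj : Integrable (fun s => x s * s ^ j) μ := by
    refine hx.mul_bdd (c := 1) (by fun_prop) ?_
    filter_upwards [hmem] with s hs
    rw [norm_pow, Real.norm_of_nonneg hs.1.le]
    exact pow_le_one₀ hs.1.le hs.2.le
  have hFm : AEStronglyMeasurable (Function.uncurry F) (μ.prod μ) := by
    have h1 : AEStronglyMeasurable (fun p : ℝ × ℝ => x p.2 / p.2 * p.1 ^ j) (μ.prod μ) := by
      have := hx.aestronglyMeasurable.comp_snd (μ := μ)
      exact ((this.aemeasurable.div measurable_snd.aemeasurable).mul
        (measurable_fst.pow_const j).aemeasurable).aestronglyMeasurable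
    exact h1.indicator (s := {p : ℝ × ℝ | p.1 < p.2})
      (measurableSet_lt measurable_fst measurable_snd)
  have hF : Integrable (Function.uncurry F) (μ.prod μ) := by
    rw [integrable_prod_iff' hFm]
    constructor
    · refine Eventually.of_forall fun s => ?_
      refine Integrable.indicator ?_ measurableSet_Iio
      have h : IntegrableOn (fun t : ℝ => t ^ j) (Icc 0 1) := (continuous_pow j).integrableOn_Icc
      exact (h.mono_set Ioo_subset_Icc_self).const_mul (x s / s)
    · refine (hxj.norm.const_mul (1 / ((j:ℝ) + 1))).congr ?_
      filter_upwards [hmem] with s hs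
      have : ∀ᵐ t ∂μ, ‖Function.uncurry F (t, s)‖
          = (Iio s).indicator (fun t => |x s / s| * t ^ j) t := by
        filter_upwards [hmem] with t ht
        simp only [F, Function.uncurry, norm_indicator_eq_indicator_norm]
        by_cases h : t ∈ Iio s
        · simp only [indicator_of_mem h, norm_mul, norm_pow, Real.norm_eq_abs, abs_of_pos ht.1]
        · simp only [indicator_of_notMem h]
      rw [integral_congr_ae this, integral_Iio_indicator hs, Real.norm_eq_abs, abs_mul, abs_div,
        abs_pow, abs_of_pos hs.1]
      have := hs.1.ne'
      field_simp
      ring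
  calc ∫ t, (∫ s in Ioo t 1, x s / s) * t ^ j ∂μ = ∫ t, ∫ s, F t s ∂μ ∂μ := by
        refine integral_congr_ae ?_
        filter_upwards [hmem] with t ht
        have : ∀ s, F t s = (Ioi t).indicator (fun s => x s / s * t ^ j) s := by
          intro s
          by_cases h : t < s <;> simp [F, h]
        simp_rw [this]
        rw [setIntegral_indicator measurableSet_Ioi, Ioo_inter_Ioi, max_eq_right ht.1.le,
          integral_mul_const]
    _ = ∫ s, ∫ t, F t s ∂μ ∂μ := integral_integral_swap hF
    _ = _ := by
        rw [← integral_const_mul]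
        refine integral_congr_ae ?_
        filter_upwards [hmem] with s hs
        simp only [F]
        rw [integral_Iio_indicator hs]
        have := hs.1.ne'
        field_simp
        ring

lemma comp_apply_eq (H : L2I →L[ℝ] ell2) (Cs : L2I →L[ℝ] L2I)
    (hH : ∀ (x : L2I) (j : ℕ), H x j = ∫ t in Ioo (0:ℝ) 1, x t * t ^ j)
    (hC : ∀ x : L2I, ∀ᵐ t ∂(volume.restrict (Ioo (0:ℝ) 1)),
      Cs x t = ∫ s in Ioo t 1, x s / s) (x : L2I) (j : ℕ) :
    H (Cs x) j = (1 / ((j:ℝ) + 1)) * H x j := by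
  rw [hH, hH, ← moment_cesaro ((Lp.memLp x).integrable one_le_two)]
  refine integral_congr_ae ?_
  filter_upwards [hC x] with t ht
  rw [ht]

/-- Truncations to the first `n` coordinates of `x ↦ ((H x) j / (j + 1))_j` have finite rank and
converge to it in operator norm with error at most `‖H‖ / (n + 1)`. -/
lemma isCompactOperator_of_diagonal {E : Type*} [NormedAddCommGroup E] [NormedSpace ℝ E]
    (H T : E →L[ℝ] ell2) (h : ∀ x j, T x j = (1 / ((j:ℝ) + 1)) * H x j) :
    IsCompactOperator T := by
  let S : ℕ → E →L[ℝ] ell2 := fun n => ∑ j ∈ Finset.range n,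
    (lp.singleContinuousLinearMap ℝ (fun _ : ℕ => ℝ) 2 j).comp
      ((lp.evalCLM ℝ (fun _ : ℕ => ℝ) 2 j).comp T)
  have hSapp : ∀ n x j, S n x j = if j < n then T x j else 0 := by
    intro n x j
    simp only [S, sum_apply, ContinuousLinearMap.comp_apply, lp.coeFn_sum,
      Finset.sum_apply]
    simp [Pi.single_apply, lp.evalCLM]
  have hS : ∀ n, IsCompactOperator (S n) := by
    intro n
    have : S n ∈ compactOperator (RingHom.id ℝ) E ell2 := by
      refine Submodule.sum_mem _ fun j _ => ?_
      have h1 : IsCompactOperator ((lp.evalCLM ℝ (fun _ : ℕ => ℝ) 2 j).comp T) :=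
        isCompactOperator_of_locallyCompactSpace_dom _
      exact h1.clm_comp (lp.singleContinuousLinearMap ℝ (fun _ : ℕ => ℝ) 2 j)
    exact this
  refine isCompactOperator_of_tendsto (F := S) (l := atTop) ?_ (Eventually.of_forall hS)
  rw [tendsto_iff_norm_sub_tendsto_zero]
  have hlim : Tendsto (fun n : ℕ => 1 / ((n:ℝ) + 1) * ‖H‖) atTop (𝓝 0) := by
    simpa using tendsto_one_div_add_atTop_nhds_zero_nat.mul_const ‖H‖
  refine squeeze_zero (fun _ => norm_nonneg _) (fun n => ?_) hlim
  refine ContinuousLinearMap.opNorm_le_bound _ (by positivity) fun x => ?_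
  have h1 : ‖(S n - T) x‖ ≤ ‖(1 / ((n:ℝ) + 1)) • H x‖ := by
    refine lp.norm_mono two_ne_zero fun j => ?_
    have : (S n - T) x j = S n x j - T x j := rfl
    rw [this, hSapp]
    split_ifs with hj
    · rw [sub_self, norm_zero]
      exact norm_nonneg _
    · push Not at hj
      rw [zero_sub, norm_neg, h, lp.coeFn_smul, Pi.smul_apply, smul_eq_mul, norm_mul, norm_mul]
      gcongr
      rw [Real.norm_of_nonneg (by positivity), Real.norm_of_nonneg (by positivity)]
      gcongr
  refine h1.trans ?_
  rw [norm_smul, Real.norm_of_nonneg (by positivity), mul_assoc]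
  gcongr
  exact H.le_opNorm x

/-- A bounded sequence whose images stay away from `0`, while `0` is the only possible
limit of subsequences of the images, witnesses non-compactness. -/
lemma not_isCompactOperator_of_seq {E F : Type*} [NormedAddCommGroup E] [NormedSpace ℝ E]
    [NormedAddCommGroup F] [NormedSpace ℝ F] (K : E →L[ℝ] F) (x : ℕ → E)
    (hx : ∀ n, ‖x n‖ ≤ 1) {c : ℝ} (hc : 0 < c) (hK : ∀ n, c ≤ ‖K (x n)‖)
    (hlim : ∀ (y : F) (φ : ℕ → ℕ), StrictMono φ →
      Tendsto (fun n => K (x (φ n))) atTop (𝓝 y) → y = 0) :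
    ¬ IsCompactOperator K := by
  intro hcomp
  have hcpt := hcomp.isCompact_closure_image_closedBall (f := (K : E →ₗ[ℝ] F)) 1
  obtain ⟨y, -, φ, hφ, hy⟩ := hcpt.tendsto_subseq (x := fun n => K (x n)) fun n =>
    subset_closure ⟨x n, by simpa using hx n, rfl⟩
  have h0 := hlim y φ hφ hy
  have := ge_of_tendsto hy.norm (Eventually.of_forall fun n => hK (φ n))
  rw [h0, norm_zero] at this
  linarith

/-- The normalised monomial `√(2n+1) tⁿ` in `L²(0,1)`. -/
def monomial (n : ℕ) : L2I :=
  MemLp.toLp (fun t : ℝ => √(2 * n + 1) * t ^ n) (by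
    refine MemLp.of_bound (by fun_prop) (√(2 * n + 1)) ?_
    filter_upwards [ae_restrict_mem measurableSet_Ioo] with t ht
    rw [Real.norm_of_nonneg (mul_nonneg (by positivity) (pow_nonneg ht.1.le _))]
    exact mul_le_of_le_one_right (by positivity) (pow_le_one₀ ht.1.le ht.2.le))

lemma monomial_coeFn (n : ℕ) :
    monomial n =ᵐ[volume.restrict (Ioo (0:ℝ) 1)] fun t : ℝ => √(2 * n + 1) * t ^ n :=
  MemLp.coeFn_toLp _

lemma norm_monomial (n : ℕ) : ‖monomial n‖ = 1 := by
  have h : ‖monomial n‖ ^ 2 = 1 := by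
    rw [← real_inner_self_eq_norm_sq, L2.inner_def]
    calc _ = ∫ t in Ioo (0:ℝ) 1, (2 * n + 1) * t ^ (2 * n) := by
          refine integral_congr_ae ?_
          filter_upwards [monomial_coeFn n] with t ht
          have := Real.sq_sqrt (show (0:ℝ) ≤ 2 * n + 1 by positivity)
          rw [ht, real_inner_self_eq_norm_sq, Real.norm_eq_abs, sq_abs, mul_pow, this]
          ring
      _ = 1 := by
          rw [integral_const_mul, integral_Ioo_pow zero_le_one]
          push_cast
          field_simp
          simp
  nlinarith [norm_nonneg (monomial n)]

lemma moment_monomial (H : L2I →L[ℝ] ell2)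
    (hH : ∀ (x : L2I) (j : ℕ), H x j = ∫ t in Ioo (0:ℝ) 1, x t * t ^ j) (n j : ℕ) :
    H (monomial n) j = √(2 * n + 1) / (n + j + 1) := by
  rw [hH]
  calc _ = ∫ t in Ioo (0:ℝ) 1, √(2 * n + 1) * t ^ (n + j) := by
        refine integral_congr_ae ?_
        filter_upwards [monomial_coeFn n] with t ht
        rw [ht]
        ring
    _ = _ := by
        rw [integral_const_mul, integral_Ioo_pow zero_le_one]
        simp [div_eq_mul_inv]

lemma not_isCompactOperator_moment (H : L2I →L[ℝ] ell2)
    (hH : ∀ (x : L2I) (j : ℕ), H x j = ∫ t in Ioo (0:ℝ) 1, x t * t ^ j) :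
    ¬ IsCompactOperator H := by
  refine not_isCompactOperator_of_seq H monomial (fun n => (norm_monomial n).le)
    (c := 1 / 2) (by norm_num) (fun n => ?_) ?_
  · have h := lp.sum_rpow_le_norm_rpow (p := 2) (by norm_num) (H (monomial n))
      (Finset.range (n + 1))
    simp only [moment_monomial H hH, ENNReal.toReal_ofNat, Real.rpow_two] at h
    have h2 : ((n:ℝ) + 1) * ((2 * n + 1) / (2 * n + 1) ^ 2) ≤ ‖H (monomial n)‖ ^ 2 := by
      refine le_trans ?_ h
      have : ∑ _j ∈ Finset.range (n + 1), ((2 * (n:ℝ) + 1) / (2 * n + 1) ^ 2)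
          = ((n:ℝ) + 1) * ((2 * n + 1) / (2 * n + 1) ^ 2) := by simp
      rw [← this]
      refine Finset.sum_le_sum fun j hj => ?_
      have hj' : (j:ℝ) ≤ n := by
        exact_mod_cast Nat.lt_succ_iff.mp (Finset.mem_range.mp hj)
      rw [norm_div, div_pow, Real.norm_of_nonneg (Real.sqrt_nonneg _),
        Real.sq_sqrt (by positivity), Real.norm_of_nonneg (by positivity)]
      gcongr
      linarith
    have h3 : (1:ℝ) / 4 ≤ ((n:ℝ) + 1) * ((2 * n + 1) / (2 * n + 1) ^ 2) := by
      rw [← mul_div_assoc, div_le_div_iff₀ (by norm_num) (by positivity)]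
      have : (0:ℝ) ≤ n := by positivity
      nlinarith
    nlinarith [norm_nonneg (H (monomial n))]
  · intro y φ hφ hy
    ext j
    have h1 : Tendsto (fun n => H (monomial (φ n)) j) atTop (𝓝 (y j)) :=
      ((lp.evalCLM ℝ (fun _ : ℕ => ℝ) 2 j).continuous.tendsto y).comp hy
    have h2 : Tendsto (fun n => H (monomial n) j) atTop (𝓝 0) := by
      -- `√(2n+1) / (n+j+1) ≤ 2 / √(2n+1)`
      have h3 : Tendsto (fun n : ℕ => 2 / √(2 * (n:ℝ) + 1)) atTop (𝓝 0) := by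
        refine Tendsto.const_div_atTop (Real.tendsto_sqrt_atTop.comp ?_) 2
        exact tendsto_atTop_add_const_right _ _
          (tendsto_natCast_atTop_atTop.const_mul_atTop two_pos)
      refine squeeze_zero (fun n => ?_) (fun n => ?_) h3
      · rw [moment_monomial H hH]; positivity
      · rw [moment_monomial H hH, div_le_div_iff₀ (by positivity) (by positivity),
          Real.mul_self_sqrt (by positivity)]
        have : (0:ℝ) ≤ j := by positivity
        linarith
    exact tendsto_nhds_unique h1 (h2.comp hφ.tendsto_atTop)

/-- The `L²(0,1)`-normalised indicator of the dyadic interval `(2⁻ⁿ⁻¹, 2⁻ⁿ)`. -/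
def dyadic (n : ℕ) : L2I :=
  (√((1/2:ℝ) ^ (n + 1)))⁻¹ •
    indicatorConstLp 2 (measurableSet_Ioo (a := (1/2:ℝ) ^ (n + 1)) (b := (1/2:ℝ) ^ n))
      (measure_ne_top _ _) 1

lemma dyadic_coeFn (n : ℕ) : dyadic n =ᵐ[volume.restrict (Ioo (0:ℝ) 1)]
    (Ioo ((1/2:ℝ) ^ (n + 1)) ((1/2:ℝ) ^ n)).indicator fun _ => (√((1/2:ℝ) ^ (n + 1)))⁻¹ := by
  refine (Lp.coeFn_smul _ _).trans ?_
  filter_upwards [indicatorConstLp_coeFn (p := 2) (c := (1:ℝ))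
    (μ := volume.restrict (Ioo (0:ℝ) 1))
    (hs := measurableSet_Ioo (a := (1/2:ℝ) ^ (n + 1)) (b := (1/2:ℝ) ^ n))
    (hμs := measure_ne_top _ _)] with t ht
  rw [Pi.smul_apply, ht]
  by_cases h : t ∈ Ioo ((1/2:ℝ) ^ (n + 1)) ((1/2:ℝ) ^ n)
  · rw [indicator_of_mem h, indicator_of_mem h, smul_eq_mul, mul_one]
  · rw [indicator_of_notMem h, indicator_of_notMem h, smul_zero]

lemma measureReal_Ioo {a b : ℝ} (ha : 0 ≤ a) (hb : b ≤ 1) (hab : a ≤ b) :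
    (volume.restrict (Ioo (0:ℝ) 1)).real (Ioo a b) = b - a := by
  rw [measureReal_restrict_apply measurableSet_Ioo, Ioo_inter_Ioo, sup_eq_left.2 ha,
    inf_eq_left.2 hb, Real.volume_real_Ioo_of_le hab]

lemma orthonormal_dyadic : Orthonormal ℝ dyadic := by
  rw [orthonormal_iff_ite]
  intro m n
  rw [dyadic, dyadic, real_inner_smul_left, real_inner_smul_right,
    L2.real_inner_indicatorConstLp_one_indicatorConstLp_one]
  split_ifs with h
  · subst h
    rw [inter_self, measureReal_Ioo (by positivity) (pow_le_one₀ (by norm_num) (by norm_num))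
      (pow_le_pow_of_le_one (by norm_num) (by norm_num) (Nat.le_succ m)), ← mul_assoc, ← mul_inv,
      Real.mul_self_sqrt (by positivity), pow_succ]
    field_simp
    norm_num
  · have hd : Ioo ((1/2:ℝ) ^ (m + 1)) ((1/2:ℝ) ^ m) ∩ Ioo ((1/2:ℝ) ^ (n + 1)) ((1/2:ℝ) ^ n)
        = ∅ := by
      have key : ∀ p q : ℕ, p < q → (1/2:ℝ) ^ q ≤ (1/2:ℝ) ^ (p + 1) := fun p q hpq =>
        pow_le_pow_of_le_one (by norm_num) (by norm_num) hpq
      ext t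
      simp only [mem_inter_iff, mem_Ioo, mem_empty_iff_false, iff_false]
      rintro ⟨⟨h1, h2⟩, h3, h4⟩
      rcases lt_or_gt_of_ne h with h | h
      · linarith [key _ _ h]
      · linarith [key _ _ h]
    rw [hd, measureReal_empty, mul_zero, mul_zero]

/-- On `(0, 2⁻ⁿ⁻¹)` the function `C* (dyadic n)` is the constant `√(2ⁿ⁺¹) log 2`; pairing it with
the indicator of that interval gives the bound. -/
lemma log_two_le_norm_cesaro_dyadic (Cs : L2I →L[ℝ] L2I)
    (hC : ∀ x : L2I, ∀ᵐ t ∂(volume.restrict (Ioo (0:ℝ) 1)),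
      Cs x t = ∫ s in Ioo t 1, x s / s) (n : ℕ) :
    Real.log 2 ≤ ‖Cs (dyadic n)‖ := by
  set r : ℝ := (1/2:ℝ) ^ (n + 1) with hr
  have hr0 : 0 < r := by positivity
  have h2r : (1/2:ℝ) ^ n = 2 * r := by rw [hr, pow_succ]; ring
  have h2r1 : 2 * r ≤ 1 := h2r ▸ pow_le_one₀ (by norm_num) (by norm_num)
  have hsub : Ioo (0:ℝ) r ⊆ Ioo 0 1 := Ioo_subset_Ioo_right (by linarith)
  have hval : ∀ t ∈ Ioo (0:ℝ) r, ∫ s in Ioo t 1, dyadic n s / s = (√r)⁻¹ * Real.log 2 := by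
    intro t ht
    have h1 : ∀ᵐ s ∂(volume.restrict (Ioo t 1)), dyadic n s / s
        = (Ioo r (2 * r)).indicator (fun s => (√r)⁻¹ * s⁻¹) s := by
      have := ae_mono (Measure.restrict_mono_set volume
        (Ioo_subset_Ioo_left ht.1.le : Ioo t 1 ⊆ Ioo (0:ℝ) 1)) (dyadic_coeFn n)
      filter_upwards [this] with s hs
      rw [hs, h2r, ← hr]
      by_cases h : s ∈ Ioo r (2 * r) <;> simp [h, div_eq_mul_inv]
    rw [integral_congr_ae h1, setIntegral_indicator measurableSet_Ioo, Ioo_inter_Ioo,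
      sup_eq_right.2 ht.2.le, inf_eq_right.2 h2r1, integral_const_mul,
      ← integral_Ioc_eq_integral_Ioo, ← intervalIntegral.integral_of_le (by linarith),
      integral_inv_of_pos hr0 (by linarith), mul_div_assoc, div_self hr0.ne', mul_one]
  have hCS := abs_real_inner_le_norm
    (indicatorConstLp 2 (μ := volume.restrict (Ioo (0:ℝ) 1))
      (measurableSet_Ioo (a := (0:ℝ)) (b := r)) (measure_ne_top _ _) (1:ℝ)) (Cs (dyadic n))
  have hint : ∫ t in Ioo 0 r, Cs (dyadic n) t ∂(volume.restrict (Ioo (0:ℝ) 1))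
      = √r * Real.log 2 := by
    rw [Measure.restrict_restrict measurableSet_Ioo, inter_eq_left.2 hsub]
    have h1 : ∀ᵐ t ∂(volume.restrict (Ioo (0:ℝ) r)), Cs (dyadic n) t = (√r)⁻¹ * Real.log 2 := by
      filter_upwards [ae_mono (Measure.restrict_mono_set volume hsub) (hC (dyadic n)),
        ae_restrict_mem measurableSet_Ioo] with t ht htm
      rw [ht, hval t htm]
    rw [integral_congr_ae h1, setIntegral_const, Real.volume_real_Ioo_of_le hr0.le, smul_eq_mul,
      sub_zero, ← mul_assoc]
    congr 1
    have := Real.sq_sqrt hr0.le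
    have h0 : √r ≠ 0 := (Real.sqrt_pos.2 hr0).ne'
    field_simp
    exact this.symm
  rw [L2.inner_indicatorConstLp_one, hint, norm_indicatorConstLp two_ne_zero ENNReal.ofNat_ne_top,
    measureReal_Ioo le_rfl (by linarith) hr0.le, sub_zero, norm_one, one_mul,
    ENNReal.toReal_ofNat, ← Real.sqrt_eq_rpow] at hCS
  exact le_of_mul_le_mul_left ((le_abs_self _).trans hCS) (Real.sqrt_pos.2 hr0)

/-- Bessel's inequality makes an orthonormal sequence weakly null, and bounded operators preserve
weak convergence. -/
lemma eq_zero_of_tendsto_orthonormal {E : Type*} [NormedAddCommGroup E] [InnerProductSpace ℝ E]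
    [CompleteSpace E] (K : E →L[ℝ] E) {e : ℕ → E} (he : Orthonormal ℝ e) {y : E} {φ : ℕ → ℕ}
    (hφ : StrictMono φ) (hy : Tendsto (fun n => K (e (φ n))) atTop (𝓝 y)) : y = 0 := by
  have h1 : Tendsto (fun n => inner ℝ (K (e (φ n))) y) atTop (𝓝 (inner ℝ y y)) :=
    hy.inner tendsto_const_nhds
  have h2 : Tendsto (fun n => inner ℝ (e n) (K.adjoint y)) atTop (𝓝 0) := by
    have h3 := (he.inner_products_summable (x := K.adjoint y)).tendsto_atTop_zero
    have h4 := h3.sqrt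
    simp only [Real.sqrt_zero, Real.sqrt_sq (norm_nonneg _)] at h4
    exact tendsto_zero_iff_norm_tendsto_zero.2 h4
  have h5 := h2.comp hφ.tendsto_atTop
  simp only [Function.comp_def, ContinuousLinearMap.adjoint_inner_right] at h5
  exact inner_self_eq_zero.1 (tendsto_nhds_unique h1 h5)

end

/-- The composition `T = H ∘ C* : L²(0,1) → ℓ²` of the Hausdorff
moment operator `H` with the adjoint Cesàro operator `C*` is a compact operator,
even though both `H` and `C*` are non-compact. -/
theorem statement1
    (H : L2I →L[ℝ] ell2) (Cs : L2I →L[ℝ] L2I)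
    (hH : ∀ (x : L2I) (j : ℕ), H x j = ∫ t in Set.Ioo (0:ℝ) 1, x t * t ^ j)
    (hC : ∀ x : L2I, ∀ᵐ t ∂(volume.restrict (Set.Ioo (0:ℝ) 1)),
      Cs x t = ∫ s in Set.Ioo t 1, x s / s) :
    IsCompactOperator (H.comp Cs) ∧
      ¬ IsCompactOperator H ∧ ¬ IsCompactOperator Cs := by
  refine ⟨isCompactOperator_of_diagonal H _ (comp_apply_eq H Cs hH hC),
    not_isCompactOperator_moment H hH, ?_⟩
  exact not_isCompactOperator_of_seq Cs dyadic (fun n => (orthonormal_dyadic.1 n).le)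
    (Real.log_pos one_lt_two) (log_two_le_norm_cesaro_dyadic Cs hC)
    fun _ _ hφ hy => eq_zero_of_tendsto_orthonormal Cs orthonormal_dyadic hφ hy

end
end

section
/- Let T : X → Y be a bounded linear operator between Hilbert spaces with non-closed range. Then there exists an infinite-dimensional closed subspace X̃ ⊂ X such that the restriction of T to X̃ is a compact operator from X̃ to Y. -/
/-!
If the range of `T` is not closed, then `T` is not bounded below on the orthogonal complement of
any finite-dimensional subspace `F`: otherwise `T (Fᗮ)` would be closed, and so would
`range T = T (Fᗮ) + T F`, a closed subspace plus a finite-dimensional one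
(`exists_unit_orthogonal_norm_le`). Hence there is an orthonormal sequence `e` whose images satisfy
`∑ ‖T (e n)‖ < ∞` (`exists_orthonormal_summable`). Let `X̃` be the closed span of `e`. The series
`S = ∑ ⟪e n, ·⟫ T (e n)` converges absolutely in operator norm, so `S` is a norm limit of
finite-rank operators and therefore compact; it agrees with `T` at each `e n`, hence on `X̃`.
-/

section

variable {X Y : Type*}
  [NormedAddCommGroup X] [InnerProductSpace ℝ X] [CompleteSpace X]
  [NormedAddCommGroup Y] [InnerProductSpace ℝ Y]

theorem exists_unit_orthogonal_norm_le (T : X →L[ℝ] Y) (hrange : ¬ IsClosed (Set.range T))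
    (F : Submodule ℝ X) [FiniteDimensional ℝ F] {ε : ℝ} (hε : 0 < ε) :
    ∃ x ∈ Fᗮ, ‖x‖ = 1 ∧ ‖T x‖ ≤ ε := by
  by_contra! H
  apply hrange
  have hbound : ∀ x : Fᗮ, ‖x‖ ≤ (⟨ε⁻¹, by positivity⟩ : NNReal) * ‖T.comp Fᗮ.subtypeL x‖ := by
    intro x
    rcases eq_or_ne x 0 with rfl | hx
    · simp
    have hx' : 0 < ‖(x : X)‖ := by simpa using hx
    have h := H (‖(x : X)‖⁻¹ • (x : X)) (Fᗮ.smul_mem _ x.2)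
      (by rw [norm_smul, norm_inv, norm_norm, inv_mul_cancel₀ hx'.ne'])
    rw [map_smul, norm_smul, norm_inv, norm_norm, lt_inv_mul_iff₀ hx'] at h
    change ‖(x : X)‖ ≤ ε⁻¹ * ‖T x‖
    rw [le_inv_mul_iff₀ hε]
    linarith
  have hclosed : IsClosed (Set.range (T.comp Fᗮ.subtypeL)) :=
    ((T.comp Fᗮ.subtypeL).antilipschitz_of_bound hbound).isClosed_range
      (T.comp Fᗮ.subtypeL).uniformContinuous
  have hmap : IsClosed ((Fᗮ.map (T : X →ₗ[ℝ] Y) : Submodule ℝ Y) : Set Y) := by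
    convert hclosed using 1
    ext y
    simp
  have hsup := Submodule.isClosed_sup_finiteDimensional _ (F.map (T : X →ₗ[ℝ] Y)) hmap
  rw [← Submodule.map_sup, sup_comm, Submodule.sup_orthogonal_of_hasOrthogonalProjection,
    Submodule.map_top] at hsup
  exact hsup

theorem exists_orthonormal_summable (T : X →L[ℝ] Y) (hrange : ¬ IsClosed (Set.range T)) :
    ∃ e : ℕ → X, Orthonormal ℝ e ∧ Summable fun n => ‖T (e n)‖ := by
  classical
  -- Each vector carries a natural number `k` with `‖T x‖ ≤ 2⁻ᵏ`; making `k` strictly increasing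
  -- along the sequence gives summability.
  obtain ⟨f, hf, hf'⟩ := exists_seq_of_forall_finset_exists
    (fun p : ℕ × X => ‖p.2‖ = 1 ∧ ‖T p.2‖ ≤ (1 / 2 : ℝ) ^ p.1)
    (fun p q => p.1 < q.1 ∧ inner ℝ p.2 q.2 = 0) (by
      intro s _
      obtain ⟨x, hx, hx1, hTx⟩ := exists_unit_orthogonal_norm_le T hrange
        (Submodule.span ℝ (s.image Prod.snd : Set X))
        (ε := (1 / 2 : ℝ) ^ (s.sup Prod.fst + 1)) (by positivity)
      refine ⟨(s.sup Prod.fst + 1, x), ⟨hx1, hTx⟩, fun p hp => ⟨?_, ?_⟩⟩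
      · exact Nat.lt_succ_of_le (Finset.le_sup (f := Prod.fst) hp)
      · exact (Submodule.mem_orthogonal _ _).1 hx _
          (Submodule.subset_span (Finset.mem_coe.2 (Finset.mem_image_of_mem _ hp))))
  refine ⟨fun n => (f n).2, ⟨fun n => (hf n).1, fun m n hmn => ?_⟩, ?_⟩
  · rcases lt_or_gt_of_ne hmn with h | h
    · exact (hf' m n h).2
    · change inner ℝ (f m).2 (f n).2 = 0
      rw [real_inner_comm]
      exact (hf' n m h).2
  · have hmono : StrictMono fun n => (f n).1 := fun m n h => (hf' m n h).1
    exact Summable.of_nonneg_of_le (fun _ => norm_nonneg _) (fun n => (hf n).2)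
      (summable_geometric_two.comp_injective hmono.injective)

end

/-- Let `T : X → Y` be a bounded linear operator between
Hilbert spaces with non-closed range.  Then there exists an infinite-dimensional
closed subspace `X̃ ⊆ X` such that the restriction of `T` to `X̃` is a compact
operator from `X̃` to `Y`. -/
theorem statement10
    {X Y : Type*}
    [NormedAddCommGroup X] [InnerProductSpace ℝ X] [CompleteSpace X]
    [NormedAddCommGroup Y] [InnerProductSpace ℝ Y] [CompleteSpace Y]
    (T : X →L[ℝ] Y)
    (hrange : ¬ IsClosed (Set.range T)) :
    ∃ Xt : Submodule ℝ X, IsClosed (Xt : Set X) ∧ ¬ FiniteDimensional ℝ Xt ∧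
      IsCompactOperator (T.comp Xt.subtypeL) := by
  obtain ⟨e, he, hsum⟩ := exists_orthonormal_summable T hrange
  have hmem : ∀ n, e n ∈ (Submodule.span ℝ (Set.range e)).topologicalClosure := fun n =>
    Submodule.le_topologicalClosure _ (Submodule.subset_span ⟨n, rfl⟩)
  refine ⟨(Submodule.span ℝ (Set.range e)).topologicalClosure,
    Submodule.isClosed_topologicalClosure _, fun hfin => ?_, ?_⟩
  · have hli : LinearIndependent ℝ
        fun n => (⟨e n, hmem n⟩ : (Submodule.span ℝ (Set.range e)).topologicalClosure) :=
      LinearIndependent.of_comp (Submodule.subtype _) he.linearIndependent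
    exact not_finite_iff_infinite.2 (inferInstance : Infinite ℕ) hli.finite
  · let R : ℕ → X →L[ℝ] Y := fun n => InnerProductSpace.rankOne ℝ (T (e n)) (e n)
    have hR : Summable R := Summable.of_norm (by simpa [R, he.1] using hsum)
    have hRc : ∀ n, IsCompactOperator (R n) := fun n =>
      (isCompactOperator_of_locallyCompactSpace_dom (innerSL ℝ (e n))).clm_comp
        (ContinuousLinearMap.toSpanSingleton ℝ (T (e n)))
    have hRm : ∀ m, R m (e m) = T (e m) := fun m => by simp [R, he.1]
    have hRn : ∀ m n, n ≠ m → R n (e m) = 0 := fun m n hn => by simp [R, he.2 hn]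
    clear_value R
    obtain ⟨S, hRS⟩ := hR
    have hS : IsCompactOperator S :=
      isCompactOperator_of_tendsto hRS (Filter.Eventually.of_forall fun s =>
        (compactOperator (RingHom.id ℝ) X Y).sum_mem fun n _ => hRc n)
    have heq : Set.EqOn T S (Set.range e) := by
      rintro _ ⟨m, rfl⟩
      have h1 : HasSum (fun n => R n (e m)) (S (e m)) :=
        hRS.mapL (ContinuousLinearMap.apply ℝ Y (e m))
      have h2 : HasSum (fun n => R n (e m)) (R m (e m)) := hasSum_single m (hRn m)
      rw [h1.unique h2, hRm]
    have hrestrict : T.comp (Submodule.span ℝ (Set.range e)).topologicalClosure.subtypeL =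
        S.comp
          (Submodule.span ℝ (Set.range e)).topologicalClosure.subtypeL := by
      ext x
      exact ContinuousLinearMap.eqOn_closure_span heq x.2
    rw [hrestrict]
    exact hS.comp_clm _
end

section
/- Let T : X → Y be a bounded linear operator between Hilbert spaces with non-closed range. Then there exists a non-compact bounded linear operator B : X → X such that the composition T∘B : X → Y is compact. -/
/-!
Since the range of `T` is not closed, `T` is not bounded below on the orthogonal complement of any
finite-dimensional subspace `F`: otherwise `T(Fᗮ)` would be closed, and adding the
finite-dimensional `T(F)` would keep it closed (`exists_unit_orthogonal_norm_lt`). Choosing unit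
vectors successively in such complements gives an orthonormal sequence `e` with `‖T (e n)‖ ≤ 2⁻ⁿ`
(`exists_orthonormal_seq`).

Let `V : ℓ² → X` be the isometry sending the standard basis to `e`, and take `B = V V†`, the
orthogonal projection onto the closed span of `e`. The operator `T V = ∑ ⟪δₙ, ·⟫ T (e n)` is an
operator-norm convergent sum of rank-one operators, so it is compact, and hence so is
`T B = (T V) V†`. If `B` were compact, so would be `V† B V = id` on the infinite-dimensional `ℓ²`.
-/

section

variable {X Y : Type*}
  [NormedAddCommGroup X] [InnerProductSpace ℝ X] [CompleteSpace X]
  [NormedAddCommGroup Y] [InnerProductSpace ℝ Y]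

lemma exists_unit_orthogonal_norm_lt (T : X →L[ℝ] Y) (hrange : ¬ IsClosed (Set.range T))
    (F : Submodule ℝ X) [FiniteDimensional ℝ F] {ε : ℝ} (hε : 0 < ε) :
    ∃ x ∈ Fᗮ, ‖x‖ = 1 ∧ ‖T x‖ < ε := by
  by_contra! h
  apply hrange
  have hbound : ∀ x ∈ Fᗮ, ε * ‖x‖ ≤ ‖T x‖ := by
    intro x hx
    rcases eq_or_ne x 0 with rfl | hx0
    · simp
    have hn : 0 < ‖x‖ := norm_pos_iff.mpr hx0
    have h1 := h (‖x‖⁻¹ • x) (Fᗮ.smul_mem _ hx) (norm_smul_inv_norm (𝕜 := ℝ) hx0)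
    rw [map_smul, norm_smul, norm_inv, norm_norm, inv_mul_eq_div, le_div_iff₀ hn] at h1
    exact h1
  have hanti : AntilipschitzWith (⟨ε⁻¹, by positivity⟩ : NNReal) (T.comp Fᗮ.subtypeL) := by
    refine AddMonoidHomClass.antilipschitz_of_bound _ fun x => ?_
    have h1 := hbound x x.2
    change ‖(x : X)‖ ≤ ε⁻¹ * ‖T x‖
    rwa [inv_mul_eq_div, le_div_iff₀ hε, mul_comm]
  have hmap : IsClosed ((Fᗮ.map (T : X →ₗ[ℝ] Y) : Submodule ℝ Y) : Set Y) := by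
    convert hanti.isClosed_range (T.comp Fᗮ.subtypeL).uniformContinuous using 1
    ext y
    simp
  have hsup := Submodule.isClosed_sup_finiteDimensional _ (F.map (T : X →ₗ[ℝ] Y)) hmap
  rw [← Submodule.map_sup, sup_comm, Submodule.sup_orthogonal_of_hasOrthogonalProjection,
    Submodule.map_top] at hsup
  rwa [LinearMap.coe_range] at hsup

lemma exists_orthonormal_seq (T : X →L[ℝ] Y) (hrange : ¬ IsClosed (Set.range T)) :
    ∃ e : ℕ → X, Orthonormal ℝ e ∧ ∀ n, ‖T (e n)‖ ≤ (1 / 2) ^ n := by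
  -- Each vector carries an index `k` with `‖T x‖ ≤ 2⁻ᵏ`; the indices increase along the sequence.
  obtain ⟨f, hf, hr⟩ := exists_seq_of_forall_finset_exists
    (fun p : ℕ × X => ‖p.2‖ = 1 ∧ ‖T p.2‖ ≤ (1 / 2) ^ p.1)
    (fun p q => p.1 < q.1 ∧ inner ℝ p.2 q.2 = 0) (by
      classical
      intro s _
      obtain ⟨x, hx, hx1, hxT⟩ := exists_unit_orthogonal_norm_lt T hrange
        (Submodule.span ℝ (s.image Prod.snd : Set X))
        (ε := (1 / 2) ^ (s.sup Prod.fst + 1)) (by positivity)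
      refine ⟨(s.sup Prod.fst + 1, x), ⟨hx1, hxT.le⟩, fun p hp => ⟨?_, ?_⟩⟩
      · exact Nat.lt_succ_of_le (Finset.le_sup (f := Prod.fst) hp)
      · refine (Submodule.mem_orthogonal _ _).mp hx _ (Submodule.subset_span ?_)
        exact Finset.mem_coe.mpr (Finset.mem_image_of_mem _ hp))
  have hmono : StrictMono fun n => (f n).1 := fun m n hmn => (hr m n hmn).1
  refine ⟨fun n => (f n).2, ⟨fun n => (hf n).1, fun m n hmn => ?_⟩, fun n => (hf n).2.trans ?_⟩
  · rcases lt_or_gt_of_ne hmn with h | h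
    · exact (hr m n h).2
    · rw [real_inner_comm]
      exact (hr n m h).2
  · exact pow_le_pow_of_le_one (by norm_num) (by norm_num) (hmono.id_le n)

/-- The isometry `ℓ² → X` sending the standard basis to the orthonormal sequence `e`. -/
noncomputable def seqIsometry {e : ℕ → X} (he : Orthonormal ℝ e) :
    lp (fun _ : ℕ => ℝ) 2 →ₗᵢ[ℝ] X :=
  he.orthogonalFamily.linearIsometry

lemma hasSum_seqIsometry {e : ℕ → X} (he : Orthonormal ℝ e) (a : lp (fun _ : ℕ => ℝ) 2) :
    HasSum (fun n => a n • e n) (seqIsometry he a) :=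
  he.orthogonalFamily.hasSum_linearIsometry a

lemma isCompactOperator_comp_seqIsometry [CompleteSpace Y] (T : X →L[ℝ] Y) {e : ℕ → X}
    (he : Orthonormal ℝ e) (hT : ∀ n, ‖T (e n)‖ ≤ (1 / 2) ^ n) :
    IsCompactOperator (T.comp (seqIsometry he).toContinuousLinearMap) := by
  let R : ℕ → lp (fun _ : ℕ => ℝ) 2 →L[ℝ] Y := fun n =>
    (innerSL ℝ (lp.single 2 n (1 : ℝ) : lp (fun _ : ℕ => ℝ) 2)).smulRight (T (e n))
  have hRn : ∀ n, ‖R n‖ ≤ (1 / 2) ^ n := fun n => by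
    simpa [R, lp.norm_single] using hT n
  have hR : ∀ n a, R n a = a n • T (e n) := fun n a => by
    simp [R, lp.inner_single_left]
  have hsum : Summable R :=
    Summable.of_norm_bounded (summable_geometric_of_lt_one (by norm_num) (by norm_num)) hRn
  have heq : T.comp (seqIsometry he).toContinuousLinearMap = ∑' n, R n := by
    ext a
    have h1 : HasSum (fun n => R n a) ((∑' n, R n) a) :=
      hsum.hasSum.mapL (ContinuousLinearMap.apply ℝ Y a)
    have h2 : HasSum (fun n => R n a) (T (seqIsometry he a)) := by
      simpa [hR] using (hasSum_seqIsometry he a).mapL T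
    exact h2.unique h1
  rw [heq]
  refine isCompactOperator_of_tendsto hsum.hasSum (.of_forall fun s => ?_)
  refine (compactOperator (RingHom.id ℝ) (lp (fun _ : ℕ => ℝ) 2) Y).sum_mem fun n _ => ?_
  -- `R n` factors through the locally compact space `ℝ`.
  exact (isCompactOperator_of_locallyCompactSpace_dom
    (innerSL ℝ (lp.single 2 n (1 : ℝ) : lp (fun _ : ℕ => ℝ) 2))).clm_comp
      (ContinuousLinearMap.toSpanSingleton ℝ (T (e n)))

lemma not_finiteDimensional_lp_two : ¬ FiniteDimensional ℝ (lp (fun _ : ℕ => ℝ) 2) := by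
  intro h
  have hon : Orthonormal ℝ fun n : ℕ => (lp.single 2 n (1 : ℝ) : lp (fun _ : ℕ => ℝ) 2) := by
    refine ⟨fun n => by simp [lp.norm_single], fun m n hmn => ?_⟩
    simp [lp.inner_single_left, lp.single_apply, hmn]
  have := hon.linearIndependent.finite
  exact not_finite ℕ

end

/-- Let `T : X → Y` be a bounded linear operator between
Hilbert spaces with non-closed range.  Then there exists a non-compact bounded
linear operator `B : X → X` such that the composition `T ∘ B : X → Y` is
compact. -/
theorem statement11
    {X Y : Type*}
    [NormedAddCommGroup X] [InnerProductSpace ℝ X] [CompleteSpace X]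
    [NormedAddCommGroup Y] [InnerProductSpace ℝ Y] [CompleteSpace Y]
    (T : X →L[ℝ] Y)
    (hrange : ¬ IsClosed (Set.range T)) :
    ∃ B : X →L[ℝ] X, ¬ IsCompactOperator B ∧ IsCompactOperator (T.comp B) := by
  obtain ⟨e, he, hT⟩ := exists_orthonormal_seq T hrange
  let V := (seqIsometry he).toContinuousLinearMap
  refine ⟨V.comp V.adjoint, fun hB => not_finiteDimensional_lp_two ?_, ?_⟩
  · have hV : ∀ a, V.adjoint (V a) = a := fun a =>
      DFunLike.congr_fun (seqIsometry he).adjoint_comp_self a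
    have hid : IsCompactOperator (V.adjoint ∘ (V.comp V.adjoint) ∘ V) :=
      (hB.comp_clm V).clm_comp V.adjoint
    refine FiniteDimensional.of_isCompactOperator_id (𝕜 := ℝ) ?_
    have heq : V.adjoint ∘ (V.comp V.adjoint) ∘ V = id := by
      funext a
      simp [hV]
    rwa [heq] at hid
  · exact (isCompactOperator_comp_seqIsometry T he hT).comp_clm V.adjoint
end

section
/- Let T : X → Y and B : Z → X be non-compact bounded linear operators between Hilbert spaces such that T is injective and the adjoint B* is injective. If the composition T∘B is compact, then both T and B have non-closed range (i.e., both are ill-posed of type I in the sense of Nashed). -/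
/-!
Compactness of `T ∘ B` provides a compact set `K` such that `T⁻¹(K)` pulls back under `B` to a
neighbourhood of `0`. If `T` is injective with closed range, it is a closed embedding by the open
mapping theorem, so `T⁻¹(K)` is compact and witnesses the compactness of `B`. If `B` has closed
range, that range is all of `X`, being also dense by injectivity of `B*`; hence `B` is an open
map, so `T⁻¹(K)` is a neighbourhood of `0` and `K` witnesses the compactness of `T`.
-/


/-- Let `T : X → Y` and `B : Z → X` be non-compact bounded
linear operators between Hilbert spaces such that `T` is injective and the
adjoint `B*` is injective.  If the composition `T ∘ B` is compact, then both
`T` and `B` have non-closed range, i.e. both are ill-posed of type I in the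
sense of Nashed. -/
theorem statement15
    {X Y Z : Type*}
    [NormedAddCommGroup X] [InnerProductSpace ℝ X] [CompleteSpace X]
    [NormedAddCommGroup Y] [InnerProductSpace ℝ Y] [CompleteSpace Y]
    [NormedAddCommGroup Z] [InnerProductSpace ℝ Z] [CompleteSpace Z]
    (T : X →L[ℝ] Y) (B : Z →L[ℝ] X)
    (hTnoncompact : ¬ IsCompactOperator T)
    (hBnoncompact : ¬ IsCompactOperator B)
    (hTinj : Function.Injective T)
    (hBadjinj : Function.Injective (ContinuousLinearMap.adjoint B))
    (hTB : IsCompactOperator (T.comp B)) :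
    ¬ IsClosed (Set.range T) ∧ ¬ IsClosed (Set.range B) := by
  obtain ⟨K, hK, hKB⟩ := hTB
  constructor
  · intro hT
    have hemb : Topology.IsClosedEmbedding T := by
      obtain ⟨c, hc⟩ := T.antilipschitz_of_injective_of_isClosed_range hTinj hT
      exact hc.isClosedEmbedding T.uniformContinuous
    exact hBnoncompact ⟨T ⁻¹' K, hemb.isCompact_preimage hK, hKB⟩
  · intro hB
    have hsurj : Function.Surjective B := by
      have hker : (ContinuousLinearMap.adjoint B).ker = ⊥ := LinearMap.ker_eq_bot.2 hBadjinj
      have hcl : B.range.topologicalClosure = ⊤ := by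
        rw [Submodule.topologicalClosure_eq_top_iff, B.orthogonal_range, hker]
      have hB' : IsClosed (B.range : Set X) := hB
      rw [hB'.submodule_topologicalClosure_eq] at hcl
      exact LinearMap.range_eq_top.1 hcl
    refine hTnoncompact ⟨K, hK, ?_⟩
    have himg : B '' (B ⁻¹' (T ⁻¹' K)) ∈ nhds (B 0) :=
      (B.isOpenMap hsurj).image_mem_nhds hKB
    rwa [Set.image_preimage_eq _ hsurj, map_zero] at himg
end
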